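/- Let G be a finite concurrent game in which the preference relation of each player A is given by an ordered Büchi objective ω_A = ⟨(T^A_i)_{1≤i≤n_A}, ⊑_A⟩ with ⊑_A monotonic. If there is a trigger profile for a play π from a state s, then Eve has a memoryless winning strategy in the suspect game H(G,π) from the state (s, Agt). -/

import Mathlib

/-- A concurrent game: states, players, actions, allowed actions (nonempty),
a deterministic transition table, and a preference relation for each player
(intended to be a preorder on plays, i.e. on `ℕ → Stat`). -/
structure ConcGame (Stat Agt Act : Type) where
  Allow : Stat → Agt → Set Act
  Allow_nonempty : ∀ s A, (Allow s A).Nonempty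
  Tab : Stat → (Agt → Act) → Stat
  pref : Agt → (ℕ → Stat) → (ℕ → Stat) → Prop

namespace ConcGame

variable {Stat Agt Act : Type}

/-- A move is legal at a state if every player's action is allowed there. -/
def Legal (G : ConcGame Stat Agt Act) (s : Stat) (m : Agt → Act) : Prop :=
  ∀ A, m A ∈ G.Allow s A

/-- A strategy for player `A` maps a history (the list of previously visited
states) together with the current state to an allowed action. -/
def IsStrategy (G : ConcGame Stat Agt Act) (A : Agt) (σ : List Stat → Stat → Act) : Prop :=
  ∀ h s, σ h s ∈ G.Allow s A

/-- A strategy profile assigns a strategy to every player. -/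
def IsProfile (G : ConcGame Stat Agt Act) (σ : Agt → List Stat → Stat → Act) : Prop :=
  ∀ A, G.IsStrategy A (σ A)

/-- The run of a strategy profile from a state: current state together with
the history of previously visited states. -/
def run (G : ConcGame Stat Agt Act) (σ : Agt → List Stat → Stat → Act) (s : Stat) :
    ℕ → Stat × List Stat
  | 0 => (s, [])
  | n + 1 =>
    let p := run G σ s n
    (G.Tab p.1 (fun A => σ A p.2 p.1), p.2 ++ [p.1])

/-- The unique infinite outcome of a strategy profile from a state. -/
def outcome (G : ConcGame Stat Agt Act) (σ : Agt → List Stat → Stat → Act) (s : Stat)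
    (n : ℕ) : Stat :=
  (run G σ s n).1

/-- Nash equilibrium from `s`: no player can unilaterally improve her outcome. -/
def IsNash [DecidableEq Agt] (G : ConcGame Stat Agt Act) (s : Stat)
    (σ : Agt → List Stat → Stat → Act) : Prop :=
  G.IsProfile σ ∧
    ∀ A τ, G.IsStrategy A τ →
      G.pref A (G.outcome (Function.update σ A τ) s) (G.outcome σ s)

end ConcGame

/-- The set of states occurring along a play. -/
def Occ {α : Type} (ρ : ℕ → α) : Set α := Set.range ρ

/-- The set of states occurring infinitely often along a play. -/
def InfOcc {α : Type} (ρ : ℕ → α) : Set α := {x | ∀ n, ∃ m, n ≤ m ∧ ρ m = x}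

/-- The set of suspect players for the transition `(s, s')` and the move `m`:
players that could unilaterally deviate from `m` and produce `s'`. -/
def Susp {Stat Agt Act : Type} [DecidableEq Agt] (G : ConcGame Stat Agt Act)
    (s s' : Stat) (m : Agt → Act) : Set Agt :=
  {A | ∃ a ∈ G.Allow s A, G.Tab s (Function.update m A a) = s'}

/-- A strategy for Eve in the suspect game maps a history of Eve-states and the
current Eve-state to a move; it must propose legal moves. -/
def EveLegal {Stat Agt Act : Type} (G : ConcGame Stat Agt Act)
    (σE : List (Stat × Set Agt) → Stat × Set Agt → (Agt → Act)) : Prop :=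
  ∀ h q, G.Legal q.1 (σE h q)

/-- Plays of the suspect game (sequences of Eve-states) consistent with Eve's
strategy `σE` from the Eve-state `q₀`: Adam freely chooses the next state (the
first component), and the suspect sets are updated accordingly. -/
def SGConsistent {Stat Agt Act : Type} [DecidableEq Agt] (G : ConcGame Stat Agt Act)
    (σE : List (Stat × Set Agt) → Stat × Set Agt → (Agt → Act))
    (q₀ : Stat × Set Agt) (q : ℕ → Stat × Set Agt) : Prop :=
  q 0 = q₀ ∧
    ∀ n, (q (n + 1)).2 =
      (q n).2 ∩ Susp G (q n).1 (q (n + 1)).1 (σE ((List.range n).map q) (q n))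

/-- A play of the suspect game `H(G,π)` is winning for Eve iff its first
projection is at most `π` for every player in the limit of the suspect sets. -/
def WinningPlay {Stat Agt Act : Type} (G : ConcGame Stat Agt Act) (π : ℕ → Stat)
    (q : ℕ → Stat × Set Agt) : Prop :=
  ∀ A ∈ ⋂ n, (q n).2, G.pref A (fun n => (q n).1) π

/-- Eve's strategy is winning from `q₀` in `H(G,π)` if all consistent plays are
winning for Eve. -/
def WinningFrom {Stat Agt Act : Type} [DecidableEq Agt] (G : ConcGame Stat Agt Act)
    (π : ℕ → Stat)
    (σE : List (Stat × Set Agt) → Stat × Set Agt → (Agt → Act))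
    (q₀ : Stat × Set Agt) : Prop :=
  ∀ q, SGConsistent G σE q₀ q → WinningPlay G π q

/-- The run of the suspect game from `q₀` when Adam always obeys Eve. -/
def obeyRun {Stat Agt Act : Type} [DecidableEq Agt] (G : ConcGame Stat Agt Act)
    (σE : List (Stat × Set Agt) → Stat × Set Agt → (Agt → Act))
    (q₀ : Stat × Set Agt) : ℕ → (Stat × Set Agt) × List (Stat × Set Agt)
  | 0 => (q₀, [])
  | n + 1 =>
    let p := obeyRun G σE q₀ n
    let m := σE p.2 p.1
    let t := G.Tab p.1.1 m
    ((t, p.1.2 ∩ Susp G p.1.1 t m), p.2 ++ [p.1])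

/-- The outcome of Eve's strategy from `q₀` when Adam always obeys Eve. -/
def obeyOutcome {Stat Agt Act : Type} [DecidableEq Agt] (G : ConcGame Stat Agt Act)
    (σE : List (Stat × Set Agt) → Stat × Set Agt → (Agt → Act))
    (q₀ : Stat × Set Agt) (n : ℕ) : Stat × Set Agt :=
  (obeyRun G σE q₀ n).1

/-- A trigger profile for the play `π` from `s`: any unilateral deviation yields
an outcome that is at most `π` for the deviator. -/
def IsTrigger {Stat Agt Act : Type} [DecidableEq Agt] (G : ConcGame Stat Agt Act)
    (s : Stat) (π : ℕ → Stat) (σ : Agt → List Stat → Stat → Act) : Prop :=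
  G.IsProfile σ ∧
    ∀ A τ, G.IsStrategy A τ → G.pref A (G.outcome (Function.update σ A τ) s) π

/-!
An objective that depends only on the set of vertices visited infinitely often, and persists when
this set shrinks, admits positional winning strategies. Let `W` be a maximal region on which
the first player wins positionally, and let `σ` win from a vertex outside `W`. If, at some position
of a play against `σ` avoiding `W`, the set of vertices still reachable in this way were winning,
then playing at each of them what `σ` plays after one history leading there would enlarge `W`: a
play either enters `W`, or eventually visits reachable vertices only. So all these sets are losing.
But the opponent can keep `σ` outside `W` and revisit forever all that stays reachable, which
produces a losing play against `σ`.

The suspect game is of this kind, since a player is suspected in the limit iff she is suspected at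
the states visited infinitely often. Eve wins it by following a trigger profile, because a player
suspected in the limit could have produced the play by deviating alone.
-/

section Paths

variable {α : Type*}

theorem exists_seq_of_isPrefix {l : ℕ → List α} (hl : ∀ k, l k <+: l (k + 1))
    (hlen : ∀ k, k < (l k).length) :
    ∃ u : ℕ → α, ∀ k n, ∀ h : n < (l k).length, u n = (l k)[n] := by
  have prefix_of_le : ∀ ⦃j k⦄, j ≤ k → l j <+: l k := by
    intro j k hjk
    induction k, hjk using Nat.le_induction with
    | base => exact List.prefix_rfl
    | succ k _ ih => exact ih.trans (hl k)
  refine ⟨fun n => (l n)[n]'(hlen n), fun k n h => ?_⟩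
  rcases le_total k n with hkn | hnk
  · exact ((prefix_of_le hkn).getElem h).symm
  · exact (prefix_of_le hnk).getElem (hlen n)

theorem exists_isChain_extension {r : α → α → Prop} {l : List α} {a b : α} (hl : l.IsChain r)
    (ha : l.getLast? = some a) (hab : Relation.TransGen r a b) :
    ∃ l', l <+: l' ∧ l.length < l'.length ∧ l'.IsChain r ∧ l'.getLast? = some b := by
  have concat : ∀ {l : List α} {c d : α}, l.IsChain r → l.getLast? = some c → r c d →
      (l ++ [d]).IsChain r := fun hl hc hcd =>
    hl.append (.singleton _) (by simpa [hc] using hcd)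
  induction hab with
  | single hab =>
    exact ⟨l ++ [_], List.prefix_append .., by simp, concat hl ha hab, List.getLast?_concat⟩
  | tail _ hbc ih =>
    obtain ⟨l', hpre, hlt, hl', hb⟩ := ih
    exact ⟨l' ++ [_], hpre.trans (List.prefix_append ..), by grind, concat hl' hb hbc,
      List.getLast?_concat⟩

theorem exists_path_through_seq {r : α → α → Prop} {s : ℕ → α}
    (hs : ∀ k, Relation.TransGen r (s k) (s (k + 1))) :
    ∃ (u : ℕ → α) (φ : ℕ → ℕ), StrictMono φ ∧ u 0 = s 0 ∧ (∀ n, r (u n) (u (n + 1))) ∧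
      ∀ k, u (φ k) = s k := by
  have extend : ∀ k (l : {l : List α // l.IsChain r ∧ l.getLast? = some (s k)}),
      ∃ l' : {l : List α // l.IsChain r ∧ l.getLast? = some (s (k + 1))},
        l.1 <+: l'.1 ∧ l.1.length < l'.1.length := fun k ⟨l, hl, hlast⟩ =>
    let ⟨l', hpre, hlt, hl', hlast'⟩ := exists_isChain_extension hl hlast (hs k)
    ⟨⟨l', hl', hlast'⟩, hpre, hlt⟩
  choose ext ext_prefix ext_length using extend
  let l : ∀ k, {l : List α // l.IsChain r ∧ l.getLast? = some (s k)} :=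
    fun k => Nat.rec ⟨[s 0], .singleton _, rfl⟩ ext k
  have length_strictMono : StrictMono fun k => (l k).1.length :=
    strictMono_nat_of_lt_succ fun k => ext_length k (l k)
  have lt_length : ∀ k, k < (l k).1.length := by
    intro k
    induction k with
    | zero => exact Nat.one_pos
    | succ k ih => exact Nat.lt_of_le_of_lt ih (length_strictMono k.lt_succ_self)
  obtain ⟨u, hu⟩ := exists_seq_of_isPrefix (l := fun k => (l k).1)
    (fun k => ext_prefix k (l k)) lt_length
  refine ⟨u, fun k => (l k).1.length - 1, ?_, hu 0 0 (lt_length 0), fun n => ?_, fun k => ?_⟩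
  · exact fun j k hjk =>
      Nat.sub_lt_sub_right (Nat.one_le_of_lt (lt_length j)) (length_strictMono hjk)
  · have h := lt_length (n + 1)
    rw [hu (n + 1) n (by omega), hu (n + 1) (n + 1) h]
    exact List.isChain_iff_getElem.1 (l (n + 1)).2.1 n h
  · have hlast := (l k).2.2
    rw [List.getLast?_eq_getElem?, List.getElem?_eq_some_iff] at hlast
    obtain ⟨h, hlast⟩ := hlast
    rw [hu k _ h, hlast]

end Paths

section InfOcc

variable {α β : Type}

theorem mem_infOcc_iff_frequently {ρ : ℕ → α} {x : α} :
    x ∈ InfOcc ρ ↔ ∃ᶠ n in Filter.atTop, ρ n = x :=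
  Filter.frequently_atTop.symm

theorem infOcc_comp_add (ρ : ℕ → α) (n : ℕ) : InfOcc (fun k => ρ (k + n)) = InfOcc ρ := by
  ext x
  rw [mem_infOcc_iff_frequently, mem_infOcc_iff_frequently]
  conv_rhs => rw [← Filter.map_add_atTop_eq_nat n, Filter.frequently_map]

theorem infOcc_comp [Finite α] (f : α → β) (ρ : ℕ → α) : InfOcc (f ∘ ρ) = f '' InfOcc ρ := by
  ext y
  constructor
  · intro hy
    by_contra hne
    have never : ∀ x, ∀ᶠ n in Filter.atTop, f x = y → ρ n ≠ x := by
      intro x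
      by_cases hx : f x = y
      · have : x ∉ InfOcc ρ := fun h => hne ⟨x, h, hx⟩
        rw [mem_infOcc_iff_frequently, Filter.not_frequently] at this
        exact this.mono fun _ h _ => h
      · exact .of_forall fun _ h => absurd h hx
    rw [mem_infOcc_iff_frequently] at hy
    obtain ⟨n, hn, hall⟩ := (hy.and_eventually (Filter.eventually_all.2 never)).exists
    exact hall (ρ n) hn rfl
  · rintro ⟨x, hx, rfl⟩ n
    obtain ⟨m, hnm, rfl⟩ := hx n
    exact ⟨m, hnm, rfl⟩

theorem infOcc_nonempty [Finite α] (ρ : ℕ → α) : (InfOcc ρ).Nonempty := by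
  have : () ∈ InfOcc ((fun _ => ()) ∘ ρ) := fun n => ⟨n, le_rfl, rfl⟩
  rw [infOcc_comp] at this
  exact Set.image_nonempty.1 ⟨_, this⟩

theorem infOcc_subset_of_forall_succ_mem {ρ : ℕ → α} {Y : Set α} (h : ∀ n, ρ (n + 1) ∈ Y) :
    InfOcc ρ ⊆ Y := by
  intro x hx
  obtain ⟨m, hm, rfl⟩ := hx 1
  simpa [Nat.sub_add_cancel hm] using h (m - 1)

theorem exists_path_transGen_subset_infOcc {γ : Type*} [Finite α] {r : γ → γ → Prop} (f : γ → α)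
    (hr : ∀ b, ∃ c, r b c) (a : γ) :
    ∃ u : ℕ → γ, u 0 = a ∧ (∀ n, r (u n) (u (n + 1))) ∧
      ∃ n, f '' {c | Relation.TransGen r (u n) c} ⊆ InfOcc (f ∘ u) := by
  have : Nonempty α := ⟨f a⟩
  obtain ⟨g, hg⟩ := exists_surjective_nat α
  have visit : ∀ b x, ∃ c, Relation.TransGen r b c ∧
      (x ∈ f '' {c | Relation.TransGen r b c} → f c = x) := by
    intro b x
    by_cases hx : x ∈ f '' {c | Relation.TransGen r b c}
    · obtain ⟨c, hbc, hc⟩ := hx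
      exact ⟨c, hbc, fun _ => hc⟩
    · obtain ⟨c, hbc⟩ := hr b
      exact ⟨c, .single hbc, fun h => absurd h hx⟩
  choose target transGen_target f_target using visit
  -- `k ↦ g k.unpair.2` takes every value infinitely often.
  let s : ℕ → γ := fun k => Nat.rec a (fun k b => target b (g k.unpair.2)) k
  have transGen_s : ∀ k, Relation.TransGen r (s k) (s (k + 1)) := fun k => transGen_target _ _
  let R : ℕ → Set α := fun k => f '' {c | Relation.TransGen r (s k) c}
  have R_antitone : Antitone R :=
    antitone_nat_of_succ_le fun k => Set.image_mono fun c hc => (transGen_s k).trans hc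
  obtain ⟨_, ⟨N, rfl⟩, hN⟩ := (Set.toFinite (Set.range R)).exists_minimal (Set.range_nonempty R)
  obtain ⟨u, φ, hφ, hu0, hu, huφ⟩ := exists_path_through_seq transGen_s
  refine ⟨u, hu0, hu, φ N, ?_⟩
  rw [huφ]
  intro x hx m
  obtain ⟨i, rfl⟩ := hg x
  let k := Nat.pair (max m N) i
  have hk : max m N ≤ k := Nat.left_le_pair _ _
  have hxk : g i ∈ R k := hN ⟨k, rfl⟩ (R_antitone ((le_max_right _ _).trans hk)) hx
  refine ⟨φ (k + 1), ((le_max_left _ _).trans hk).trans (k.le_succ.trans (hφ.id_le _)), ?_⟩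
  have := f_target (s k) (g k.unpair.2)
  simp only [k, Nat.unpair_pair] at this hxk
  simpa [huφ, s, k] using this hxk

end InfOcc

section Arena

variable {V : Type} {M : V → Type*} (E : ∀ v, M v → V → Prop)

/-- Plays consistent with a history-dependent strategy `σ` of the first player, in the game in which
that player chooses a move `m : M v` at the current vertex `v` and the opponent then chooses a
vertex `w` with `E v m w`. A positional strategy `f` is the history-independent strategy
`fun _ => f`. -/
def IsPlay (σ : List V → ∀ v, M v) (q : ℕ → V) : Prop :=
  ∀ n, E (q n) (σ ((List.range n).map q) (q n)) (q (n + 1))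

/-- The positional strategy `f` confines all plays from the region `W` to `W` and makes the set of
vertices visited infinitely often a member of the winning family `F`. -/
structure IsPositionallyWinning (F : Set (Set V)) (f : ∀ v, M v) (W : Set V) : Prop where
  closed : ∀ v ∈ W, ∀ w, E v (f v) w → w ∈ W
  infOcc_mem : ∀ q, IsPlay E (fun _ => f) q → q 0 ∈ W → InfOcc q ∈ F

/-- One round of play against `σ` that stays in `Z`. A position consists of the list of vertices
visited before the current one, and the current vertex. -/
def PosStep (σ : List V → ∀ v, M v) (Z : Set V) (p p' : List V × Z) : Prop :=
  p'.1 = p.1 ++ [(p.2 : V)] ∧ E p.2 (σ p.1 p.2) p'.2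

variable {E} {F : Set (Set V)} {σ : List V → ∀ v, M v} {W : Set V}

theorem isPlay_of_forall_posStep {Z : Set V} {u : ℕ → List V × Z} (h0 : (u 0).1 = [])
    (hu : ∀ n, PosStep E σ Z (u n) (u (n + 1))) : IsPlay E σ fun n => (u n).2 := by
  have history_eq : ∀ n, (u n).1 = (List.range n).map fun k => ↑(u k).2 := by
    intro n
    induction n with
    | zero => simp [h0]
    | succ n ih => rw [(hu n).1, ih, List.range_succ, List.map_append, List.map_singleton]
  intro n
  rw [← history_eq n]
  exact (hu n).2

theorem IsPositionallyWinning.exists_union {f : ∀ v, M v} (hf : IsPositionallyWinning E F f W)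
    (hF : IsLowerSet F) {g : ∀ v, M v} {U Y : Set V} (hYU : Y ⊆ U) (hY : Y ∈ F)
    (hg : ∀ v ∈ U, ∀ w, E v (g v) w → w ∈ W ∪ Y) :
    ∃ f', IsPositionallyWinning E F f' (W ∪ U) := by
  classical
  let f' : ∀ v, M v := W.piecewise f g
  have step_of_mem : ∀ v ∈ W, ∀ w, E v (f' v) w → E v (f v) w := fun v hv w h => by
    rwa [← Set.piecewise_eq_of_mem W f g hv]
  have step_mem : ∀ v ∈ W ∪ U, ∀ w, E v (f' v) w → w ∈ W ∪ Y := by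
    intro v hv w hw
    by_cases hvW : v ∈ W
    · exact .inl (hf.closed v hvW w (step_of_mem v hvW w hw))
    · rw [show f' v = g v from Set.piecewise_eq_of_notMem W f g hvW] at hw
      exact hg v (hv.resolve_left hvW) w hw
  have closed : ∀ v ∈ W ∪ U, ∀ w, E v (f' v) w → w ∈ W ∪ U := fun v hv w hw =>
    Set.union_subset_union_right W hYU (step_mem v hv w hw)
  refine ⟨f', closed, fun q hq hq0 => ?_⟩
  by_cases henter : ∃ n, q n ∈ W
  · obtain ⟨n, hn⟩ := henter
    have stay : ∀ k, q (k + n) ∈ W := by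
      intro k
      induction k with
      | zero => rwa [Nat.zero_add]
      | succ k ih =>
        rw [Nat.add_right_comm]
        exact hf.closed _ ih _ (step_of_mem _ ih _ (hq (k + n)))
    rw [← infOcc_comp_add q n]
    refine hf.infOcc_mem _ (fun k => ?_) (stay 0)
    rw [Nat.add_right_comm]
    exact step_of_mem _ (stay k) _ (hq (k + n))
  · have q_mem : ∀ n, q n ∈ W ∪ U := by
      intro n
      induction n with
      | zero => exact hq0
      | succ n ih => exact closed _ ih _ (hq n)
    exact hF (infOcc_subset_of_forall_succ_mem fun n =>
      (step_mem _ (q_mem n) _ (hq n)).resolve_left fun h => henter ⟨n + 1, h⟩) hY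

theorem IsPositionallyWinning.exists_union_reachable {f : ∀ v, M v}
    (hf : IsPositionallyWinning E F f W) (hF : IsLowerSet F) (p : List V × ↥Wᶜ)
    (hp : (fun p' : List V × ↥Wᶜ => (p'.2 : V)) ''
      {p' | Relation.TransGen (PosStep E σ Wᶜ) p p'} ∈ F) :
    ∃ f' U, ↑p.2 ∈ U ∧ IsPositionallyWinning E F f' (W ∪ U) := by
  set Y := (fun p' : List V × ↥Wᶜ => (p'.2 : V)) '' {p' | Relation.TransGen (PosStep E σ Wᶜ) p p'}
  let U := (fun q : List V × ↥Wᶜ => (q.2 : V)) '' {q | Relation.ReflTransGen (PosStep E σ Wᶜ) p q}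
  -- At each reachable vertex, play what `σ` plays after one chosen history leading there.
  have move : ∀ v, ∃ m : M v, v ∈ U → ∀ w, E v m w → w ∈ W ∪ Y := by
    intro v
    by_cases hv : v ∈ U
    · obtain ⟨p', hpp', rfl⟩ := hv
      refine ⟨σ p'.1 p'.2, fun _ w hw => or_iff_not_imp_left.2 fun hwW => ?_⟩
      exact ⟨(p'.1 ++ [(p'.2 : V)], ⟨w, hwW⟩), .tail' hpp' ⟨rfl, hw⟩, rfl⟩
    · exact ⟨σ [] v, fun h => absurd h hv⟩
  choose g hg using move
  obtain ⟨f', hf'⟩ := hf.exists_union hF (U := U)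
    (Set.image_mono fun _ => Relation.TransGen.to_reflTransGen) hp hg
  exact ⟨f', U, ⟨p, .refl, rfl⟩, hf'⟩

theorem exists_isPositionallyWinning [Finite V] (hF : IsLowerSet F) (hF_empty : ∅ ∈ F) {v₀ : V}
    (hσ : ∀ q, IsPlay E σ q → q 0 = v₀ → InfOcc q ∈ F) :
    ∃ f W, v₀ ∈ W ∧ IsPositionallyWinning E F f W := by
  have empty_mem : ∅ ∈ {W | ∃ f, IsPositionallyWinning E F f W} :=
    ⟨σ [], fun _ h => h.elim, fun _ _ h => h.elim⟩
  obtain ⟨W, ⟨f, hf⟩, hmax⟩ := (Set.toFinite _).exists_maximal ⟨∅, empty_mem⟩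
  by_cases hv₀ : v₀ ∈ W
  · exact ⟨f, W, hv₀, hf⟩
  exfalso
  let label : List V × ↥Wᶜ → V := fun p => p.2
  have reach_notMem : ∀ p, label '' {p' | Relation.TransGen (PosStep E σ Wᶜ) p p'} ∉ F := by
    intro p hp
    obtain ⟨f', U, hpU, hf'⟩ := hf.exists_union_reachable hF p hp
    exact p.2.2 (hmax ⟨f', hf'⟩ Set.subset_union_left (.inr hpU))
  have posStep_serial : ∀ p, ∃ p', PosStep E σ Wᶜ p p' := by
    intro p
    by_contra! hp
    refine reach_notMem p (hF ?_ hF_empty)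
    rintro _ ⟨p', hpp', -⟩
    obtain ⟨p'', h, -⟩ := Relation.TransGen.head'_iff.1 hpp'
    exact hp p'' h
  obtain ⟨u, hu0, hu, n, hn⟩ :=
    exists_path_transGen_subset_infOcc label posStep_serial ([], ⟨v₀, hv₀⟩)
  have play := isPlay_of_forall_posStep (by rw [hu0]) hu
  exact reach_notMem (u n) (hF hn (hσ _ play (congrArg label hu0)))

end Arena

section SuspectGame

variable {Stat Agt Act : Type} {G : ConcGame Stat Agt Act} {π : ℕ → Stat}

/-- The family of sets `X` of Eve-states of `H(G, π)` such that no player, counting only the states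
of `X` in which she is suspected, can see infinitely often the same states as in a play that she
strictly prefers to `π`. -/
def winningInfSets (G : ConcGame Stat Agt Act) (π : ℕ → Stat) : Set (Set (Stat × Set Agt)) :=
  {X | ∀ A χ, InfOcc χ ⊆ Prod.fst '' {x ∈ X | A ∈ x.2} → G.pref A χ π}

theorem isLowerSet_winningInfSets : IsLowerSet (winningInfSets G π) :=
  fun _ _ hYX hX A χ hχ => hX A χ (hχ.trans (Set.image_mono fun _ hx => ⟨hYX hx.1, hx.2⟩))

theorem empty_mem_winningInfSets [Finite Stat] : ∅ ∈ winningInfSets G π := by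
  intro A χ hχ
  obtain ⟨t, ht⟩ := infOcc_nonempty χ
  obtain ⟨x, ⟨hx, -⟩, -⟩ := hχ ht
  exact hx.elim

theorem infOcc_mem_winningInfSets_iff [Finite Stat] [Finite Agt]
    (hpref : ∀ A χ χ', InfOcc χ ⊆ InfOcc χ' → G.pref A χ' π → G.pref A χ π)
    {q : ℕ → Stat × Set Agt} (hq : Antitone fun n => (q n).2) :
    InfOcc q ∈ winningInfSets G π ↔ WinningPlay G π q := by
  have infOcc_fst : InfOcc (fun n => (q n).1) = Prod.fst '' InfOcc q := infOcc_comp Prod.fst q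
  constructor
  · intro hwin A hA
    refine hwin A _ (infOcc_fst.trans_subset (Set.image_mono fun x hx => ⟨hx, ?_⟩))
    obtain ⟨m, -, rfl⟩ := hx 0
    exact Set.mem_iInter.1 hA m
  · intro hwin A χ hχ
    obtain ⟨t, ht⟩ := infOcc_nonempty χ
    obtain ⟨x, ⟨hx, hAx⟩, -⟩ := hχ ht
    have suspect : A ∈ ⋂ n, (q n).2 := by
      refine Set.mem_iInter.2 fun n => ?_
      obtain ⟨m, hnm, rfl⟩ := hx n
      exact hq hnm hAx
    refine hpref A χ _ (hχ.trans ?_) (hwin A suspect)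
    rw [infOcc_fst]
    exact Set.image_mono fun _ hy => hy.1

variable [DecidableEq Agt]

theorem SGConsistent.antitone_suspects {σE : List (Stat × Set Agt) → Stat × Set Agt → Agt → Act}
    {q₀ : Stat × Set Agt} {q : ℕ → Stat × Set Agt} (hq : SGConsistent G σE q₀ q) :
    Antitone fun n => (q n).2 :=
  antitone_nat_of_succ_le fun n => (hq.2 n).trans_subset Set.inter_subset_left

theorem exists_isStrategy_outcome_eq {σ : Agt → List Stat → Stat → Act} {A : Agt} {χ : ℕ → Stat}
    (hχ : ∀ n, A ∈ Susp G (χ n) (χ (n + 1)) fun B => σ B ((List.range n).map χ) (χ n)) :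
    ∃ τ, G.IsStrategy A τ ∧ G.outcome (Function.update σ A τ) (χ 0) = χ := by
  classical
  choose a a_mem a_tab using hχ
  let τ : List Stat → Stat → Act := fun h t =>
    if t = χ h.length then a h.length else (G.Allow_nonempty t A).some
  have hτ : G.IsStrategy A τ := by
    intro h t
    simp only [τ]
    split_ifs with ht
    · exact ht ▸ a_mem h.length
    · exact (G.Allow_nonempty t A).some_mem
  have run_eq : ∀ n, G.run (Function.update σ A τ) (χ 0) n = (χ n, (List.range n).map χ) := by
    intro n
    induction n with
    | zero => rfl
    | succ n ih =>
      have move_eq : (fun B => Function.update σ A τ B ((List.range n).map χ) (χ n)) =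
          Function.update (fun B => σ B ((List.range n).map χ) (χ n)) A (a n) := by
        funext B
        rcases eq_or_ne B A with rfl | hB
        · simp [τ]
        · simp [hB]
      simp only [ConcGame.run, ih, move_eq, a_tab, List.range_succ, List.map_append,
        List.map_singleton]
  exact ⟨τ, hτ, funext fun n => by rw [ConcGame.outcome, run_eq]⟩

theorem IsTrigger.winningFrom {s : Stat} {σ : Agt → List Stat → Stat → Act}
    (hσ : IsTrigger G s π σ) (P : Set Agt) :
    WinningFrom G π (fun h q A => σ A (h.map Prod.fst) q.1) (s, P) := by
  intro q ⟨hq0, hq⟩ A hA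
  have suspect : ∀ n, A ∈ Susp G (q n).1 (q (n + 1)).1
      fun B => σ B ((List.range n).map fun k => (q k).1) (q n).1 := by
    intro n
    have hAn := Set.mem_iInter.1 hA (n + 1)
    rw [hq n] at hAn
    simpa only [List.map_map, Function.comp_def] using hAn.2
  obtain ⟨τ, hτ, outcome_eq⟩ := exists_isStrategy_outcome_eq suspect
  rw [hq0] at outcome_eq
  exact outcome_eq ▸ hσ.2 A τ hτ

end SuspectGame

theorem stmt13_general {Stat Agt Act : Type} [Finite Stat] [Finite Agt] [DecidableEq Agt]
    (G : ConcGame Stat Agt Act) (s : Stat) (π : ℕ → Stat)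
    (hpref : ∀ A χ χ', InfOcc χ ⊆ InfOcc χ' → G.pref A χ' π → G.pref A χ π)
    (htrig : ∃ σ, IsTrigger G s π σ) :
    ∃ σE, EveLegal G σE ∧ (∀ h h' qq, σE h qq = σE h' qq) ∧
      WinningFrom G π σE (s, Set.univ) := by
  obtain ⟨σ, hσ⟩ := htrig
  let E : ∀ v : Stat × Set Agt, {m // G.Legal v.1 m} → Stat × Set Agt → Prop :=
    fun v m w => w.2 = v.2 ∩ Susp G v.1 w.1 m
  let follow : List (Stat × Set Agt) → ∀ v : Stat × Set Agt, {m // G.Legal v.1 m} :=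
    fun h v => ⟨fun A => σ A (h.map Prod.fst) v.1, fun A => hσ.1 A _ _⟩
  have follow_wins : ∀ q, IsPlay E follow q → q 0 = (s, Set.univ) →
      InfOcc q ∈ winningInfSets G π := fun q hq hq0 =>
    have hcons : SGConsistent G (fun h v => (follow h v).1) (s, Set.univ) q := ⟨hq0, hq⟩
    (infOcc_mem_winningInfSets_iff hpref hcons.antitone_suspects).2 (hσ.winningFrom _ q hcons)
  obtain ⟨f, W, hsW, hf⟩ := exists_isPositionallyWinning isLowerSet_winningInfSets
    empty_mem_winningInfSets follow_wins
  refine ⟨fun _ v => (f v).1, fun _ v => (f v).2, fun _ _ _ => rfl, fun q hq => ?_⟩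
  exact (infOcc_mem_winningInfSets_iff hpref hq.antitone_suspects).1
    (hf.infOcc_mem q hq.2 (hq.1 ▸ hsW))

/-- In a finite game with ordered Büchi objectives and
monotonic preorders, if there is a trigger profile for `π` from `s`, then Eve
has a memoryless winning strategy in the suspect game `H(G,π)` from
`(s, Agt)`. -/
theorem stmt13 {Stat Agt Act : Type} [Fintype Stat] [Fintype Agt] [Fintype Act]
    [DecidableEq Agt] (G : ConcGame Stat Agt Act)
    (nA : Agt → ℕ)
    (T : (A : Agt) → Fin (nA A) → Set Stat)
    (le : (A : Agt) → Set (Fin (nA A)) → Set (Fin (nA A)) → Prop)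
    (hrefl : ∀ A v, le A v v)
    (htrans : ∀ A u v w, le A u v → le A v w → le A u w)
    (hmono : ∀ A v w, v ⊆ w → le A v w)
    -- the preference of each player is given by the ordered Büchi objective:
    (hpref : ∀ A χ χ', G.pref A χ χ' ↔
      le A {i | (InfOcc χ ∩ T A i).Nonempty} {i | (InfOcc χ' ∩ T A i).Nonempty})
    (s : Stat) (π : ℕ → Stat)
    (htrig : ∃ σ, IsTrigger G s π σ) :
    ∃ σE, EveLegal G σE ∧ (∀ h h' qq, σE h qq = σE h' qq) ∧
      WinningFrom G π σE (s, Set.univ) := by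
  refine stmt13_general G s π (fun A χ χ' hχ hχ' => (hpref A χ π).2 (htrans A _ _ _ ?_
    ((hpref A χ' π).1 hχ'))) htrig
  exact hmono A _ _ fun _ hi => hi.mono (Set.inter_subset_inter_left _ hχ)
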